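/- Let k, l, m be positive integers with k > l and l+1 ≤ m ≤ k. If (q₁,…,q_{k−l}) ∈ Λ(k,l,m), then the truncated tuple (q₁,…,q_{m−l}) satisfies q₁+⋯+q_{m−l} = l and 1·q₁+2·q₂+⋯+(m−l)·q_{m−l} = m−1, i.e. it belongs to Λ(m,l); moreover, if l+1 ≤ m ≤ k−1 then q_j = 0 for every index j with m−l+1 ≤ j ≤ k−l. -/

import Mathlib

/-! Subtracting `∑ q i = l` from the weighted sum leaves `∑ i.val * q i = m - 1 - l`, so each single
term satisfies `j.val * q j < m - l`. Hence `q j = 0` as soon as `m - l ≤ j.val`, and both sums are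
unchanged when the vanishing entries are dropped. -/

theorem sum_castLE_of_vanish {n N : ℕ} (h : n ≤ N) (f : Fin N → ℕ)
    (hf : ∀ j : Fin N, n ≤ j.val → f j = 0) :
    ∑ i : Fin n, f (Fin.castLE h i) = ∑ j, f j := by
  refine Fintype.sum_of_injective (Fin.castLE h) (Fin.castLE_injective h) _ _ ?_ (fun _ => rfl)
  intro j hj
  refine hf j (not_lt.mp fun hlt => hj ⟨⟨j.val, hlt⟩, rfl⟩)

/-- Part (i) of the number-theoretic lemma: if `(q₁,…,q_{k−l}) ∈ Λ(k,l,m)` (i.e. the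
nonnegative integers `q i` sum to `l` and have weighted sum `∑ (i+1)·q i = m−1`),
then the truncation to the first `m−l` entries lies in `Λ(m,l)`, and if moreover
`m ≤ k−1` then all remaining entries vanish. -/
theorem lambda_projection (k l m : ℕ) (hl : 1 ≤ l) (hlk : l < k)
    (hm1 : l + 1 ≤ m) (hmk : m ≤ k)
    (q : Fin (k - l) → ℕ)
    (hsum : ∑ i, q i = l)
    (hwsum : ∑ i, (i.val + 1) * q i = m - 1) :
    (∑ i : Fin (m - l), q (Fin.castLE (by omega) i) = l) ∧
    (∑ i : Fin (m - l), (i.val + 1) * q (Fin.castLE (by omega) i) = m - 1) ∧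
    (m ≤ k - 1 → ∀ j : Fin (k - l), m - l ≤ j.val → q j = 0) := by
  have hshift : ∑ i : Fin (k - l), i.val * q i = m - 1 - l := by
    simp only [add_mul, one_mul, Finset.sum_add_distrib, hsum] at hwsum
    omega
  have hzero : ∀ j : Fin (k - l), m - l ≤ j.val → q j = 0 := by
    intro j hj
    have hle : j.val * q j ≤ m - 1 - l := hshift ▸
      Finset.single_le_sum (f := fun i : Fin (k - l) => i.val * q i)
        (fun _ _ => Nat.zero_le _) (Finset.mem_univ j)
    by_contra hne
    have := Nat.le_mul_of_pos_right j.val (Nat.pos_of_ne_zero hne)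
    omega
  refine ⟨?_, ?_, fun _ => hzero⟩
  · rw [sum_castLE_of_vanish (by omega) q hzero, hsum]
  · rw [← hwsum]
    exact sum_castLE_of_vanish (by omega) (fun i : Fin (k - l) => (i.val + 1) * q i)
      (fun j hj => by simp [hzero j hj])
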